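/- Let Q∈ℝ^{n×n} be symmetric positive definite satisfying Q(A+pc')+(A'+cp')Q+2qI≤0 for some q>0 and p∈ℝⁿ, and suppose θ≥max(1, 2|Q|L√n/q). Let Δ_θ:=diag(θ,θ²,…,θⁿ) and V(e):=e'Δ_θ^{-1}QΔ_θ^{-1}e. Then for all e,x,d∈ℝⁿ, η∈ℝ, and all λ₁,…,λₙ∈ℝ with |λᵢ|≤G, the derivative of V along ė=(A+Δ_θpc')e+Δ_θpη+p̃(x,e)−diag(λ₁,…,λₙ)d, where p̃(x,e):=f(x+e)−f(x), satisfies: 2e'Δ_θ^{-1}QΔ_θ^{-1}((A+Δ_θpc')e+Δ_θpη+p̃(x,e)−diag(λ₁,…,λₙ)d) ≤ −(θq/(2|Q|))·V(e) + (4/(θq))·|Qp|²·η² + (4G²/(θ³q))·|Q|²·|d|². -/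

import Mathlib

/-!
In the scaled error `z = Δ_θ⁻¹ e` the expression to be bounded becomes
`2θ z'Q(A+pc')z + 2η z'Qp + 2 z'QΔ_θ⁻¹p̃ - 2 z'QΔ_θ⁻¹(λd)`, because `Δ_θ⁻¹A = θAΔ_θ⁻¹` and
`c' = θc'Δ_θ⁻¹` (`scaled_dynamics`). The matrix inequality bounds the first term by `-2θq|z|²`
(`lmi_bound`). The triangular structure of `f` gives `|Δ_θ⁻¹p̃| ≤ √n L|z|` (`scaled_increment_le`),
so the choice of `θ` bounds the third term by `θq|z|²`. Since every diagonal entry of `Δ_θ⁻¹` is at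
most `θ⁻¹`, `|Δ_θ⁻¹(λd)| ≤ G|d|/θ`. Young's inequality spends `θq|z|²/4` on each of the two
disturbance terms, and the remaining `-θq|z|²/2` is compared with `V` through `V ≤ |Q||z|²`.
-/

open MeasureTheory Set Matrix

/-- Euclidean norm of a vector in `ℝⁿ`. -/
noncomputable def enorm' {n : ℕ} (x : Fin n → ℝ) : ℝ := Real.sqrt (∑ i, (x i)^2)

/-- Induced (operator) norm of a square matrix, `|A| = sup{|Ax| : |x| = 1}`. -/
noncomputable def matNorm' {n : ℕ} (M : Matrix (Fin n) (Fin n) ℝ) : ℝ :=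
  sSup ((fun x : Fin n → ℝ => enorm' (M.mulVec x)) '' {x | enorm' x = 1})

/-- The shift matrix `A` with `a_{i,i+1} = 1` and zeros elsewhere. -/
def Amat (n : ℕ) : Matrix (Fin n) (Fin n) ℝ :=
  Matrix.of fun i j => if (j:ℕ) = (i:ℕ)+1 then 1 else 0

/-- `c = (1,0,…,0)' ∈ ℝⁿ`. -/
def cvec (n : ℕ) : Fin n → ℝ := fun i => if (i:ℕ) = 0 then 1 else 0

/-- `Δ_θ = diag(θ, θ², …, θⁿ)`. -/
noncomputable def Ddiag (n : ℕ) (θ : ℝ) : Matrix (Fin n) (Fin n) ℝ :=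
  Matrix.diagonal (fun i : Fin n => θ^((i:ℕ)+1))

/-- `Δ_θ⁻¹ = diag(θ⁻¹, θ⁻², …, θ⁻ⁿ)`. -/
noncomputable def DdiagInv (n : ℕ) (θ : ℝ) : Matrix (Fin n) (Fin n) ℝ :=
  Matrix.diagonal (fun i : Fin n => (θ^((i:ℕ)+1))⁻¹)

lemma enorm'_nonneg {n : ℕ} (x : Fin n → ℝ) : 0 ≤ enorm' x := Real.sqrt_nonneg _

lemma enorm'_sq {n : ℕ} (x : Fin n → ℝ) : enorm' x ^ 2 = ∑ i, x i ^ 2 :=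
  Real.sq_sqrt (Finset.sum_nonneg fun _ _ => sq_nonneg _)

lemma dotProduct_le_enorm' {n : ℕ} (x y : Fin n → ℝ) : x ⬝ᵥ y ≤ enorm' x * enorm' y :=
  Real.sum_mul_le_sqrt_mul_sqrt _ _ _

lemma enorm'_smul {n : ℕ} (a : ℝ) (x : Fin n → ℝ) : enorm' (a • x) = |a| * enorm' x := by
  unfold enorm'
  rw [← Real.sqrt_sq_eq_abs, ← Real.sqrt_mul (sq_nonneg a), Finset.mul_sum]
  simp [mul_pow]

lemma enorm'_le_mul {n : ℕ} {x y : Fin n → ℝ} {a : ℝ} (ha : 0 ≤ a)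
    (h : ∀ i, |x i| ≤ a * |y i|) : enorm' x ≤ a * enorm' y := by
  apply abs_le_of_sq_le_sq' _ (mul_nonneg ha (enorm'_nonneg y)) |>.2
  rw [mul_pow, enorm'_sq, enorm'_sq, Finset.mul_sum]
  refine Finset.sum_le_sum fun i _ => ?_
  rw [← sq_abs (x i), ← sq_abs (y i), ← mul_pow]
  exact pow_le_pow_left₀ (abs_nonneg _) (h i) 2

lemma enorm'_le_sqrt_mul {n : ℕ} {x : Fin n → ℝ} {b : ℝ} (hb : 0 ≤ b)
    (h : ∀ i, |x i| ≤ b) : enorm' x ≤ Real.sqrt n * b := by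
  apply abs_le_of_sq_le_sq' _ (mul_nonneg (Real.sqrt_nonneg _) hb) |>.2
  rw [mul_pow, enorm'_sq, Real.sq_sqrt (Nat.cast_nonneg n)]
  calc ∑ i, x i ^ 2 ≤ ∑ _i : Fin n, b ^ 2 := Finset.sum_le_sum fun i _ => by
        rw [← sq_abs (x i)]
        exact pow_le_pow_left₀ (abs_nonneg _) (h i) 2
    _ = n * b ^ 2 := by simp

/-- The Frobenius norm bounds the image of the unit sphere, so the supremum defining `matNorm'`
is a genuine one. -/
lemma bddAbove_matNorm' {n : ℕ} (M : Matrix (Fin n) (Fin n) ℝ) :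
    BddAbove ((fun x : Fin n → ℝ => enorm' (M.mulVec x)) '' {x | enorm' x = 1}) := by
  refine ⟨Real.sqrt (∑ i, ∑ j, M i j ^ 2), ?_⟩
  rintro _ ⟨x, hx, rfl⟩
  refine Real.sqrt_le_sqrt (Finset.sum_le_sum fun i _ => ?_)
  have hx' : ∑ j, x j ^ 2 = 1 := by
    rw [← enorm'_sq, show enorm' x = 1 from hx, one_pow]
  have := Finset.sum_mul_sq_le_sq_mul_sq Finset.univ (M i) x
  rw [hx', mul_one] at this
  exact this

lemma matNorm'_nonneg {n : ℕ} (M : Matrix (Fin n) (Fin n) ℝ) : 0 ≤ matNorm' M := by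
  apply Real.sSup_nonneg
  rintro _ ⟨x, _, rfl⟩
  exact enorm'_nonneg _

lemma enorm'_mulVec_le {n : ℕ} (M : Matrix (Fin n) (Fin n) ℝ) (x : Fin n → ℝ) :
    enorm' (M.mulVec x) ≤ matNorm' M * enorm' x := by
  rcases (enorm'_nonneg x).eq_or_lt with h | h
  · have hx : x = 0 := by
      have h2 := enorm'_sq x
      rw [← h] at h2
      funext i
      have := (Finset.sum_eq_zero_iff_of_nonneg (fun i _ => sq_nonneg (x i))).1
        (by rw [← h2]; norm_num) i (Finset.mem_univ i)
      simpa using this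
    subst hx
    rw [← h, mul_zero, Matrix.mulVec_zero, ← h]
  · have hu : enorm' ((enorm' x)⁻¹ • x) = 1 := by
      rw [enorm'_smul, abs_of_pos (inv_pos.2 h), inv_mul_cancel₀ h.ne']
    have := le_csSup (bddAbove_matNorm' M) ⟨_, hu, rfl⟩
    change enorm' (M.mulVec _) ≤ matNorm' M at this
    rw [Matrix.mulVec_smul, enorm'_smul, abs_of_pos (inv_pos.2 h), inv_mul_le_iff₀ h] at this
    linarith

lemma dotProduct_mulVec_le {n : ℕ} (M : Matrix (Fin n) (Fin n) ℝ) (x y : Fin n → ℝ) :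
    x ⬝ᵥ M.mulVec y ≤ matNorm' M * enorm' x * enorm' y := by
  calc _ ≤ enorm' x * enorm' (M.mulVec y) := dotProduct_le_enorm' _ _
    _ ≤ enorm' x * (matNorm' M * enorm' y) :=
        mul_le_mul_of_nonneg_left (enorm'_mulVec_le M y) (enorm'_nonneg x)
    _ = _ := by ring

lemma dotProduct_scaled_mulVec {n : ℕ} (θ : ℝ) (Q : Matrix (Fin n) (Fin n) ℝ)
    (e w : Fin n → ℝ) :
    e ⬝ᵥ (DdiagInv n θ * Q * DdiagInv n θ).mulVec w
      = (DdiagInv n θ).mulVec e ⬝ᵥ Q.mulVec ((DdiagInv n θ).mulVec w) := by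
  rw [← Matrix.mulVec_mulVec, ← Matrix.mulVec_mulVec, Matrix.dotProduct_mulVec,
    ← Matrix.mulVec_transpose]
  simp [DdiagInv]

lemma DdiagInv_mulVec_apply {n : ℕ} (θ : ℝ) (v : Fin n → ℝ) (i : Fin n) :
    (DdiagInv n θ).mulVec v i = (θ ^ ((i : ℕ) + 1))⁻¹ * v i :=
  Matrix.mulVec_diagonal _ _ _

/-- The scaling identities `Δ_θ⁻¹A = θAΔ_θ⁻¹` and `c' = θc'Δ_θ⁻¹`, combined. -/
lemma scaled_dynamics {n : ℕ} {θ : ℝ} (hθ : 0 < θ) (p e : Fin n → ℝ) :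
    (DdiagInv n θ).mulVec
        ((Amat n + Matrix.vecMulVec (fun i : Fin n => θ^((i:ℕ)+1) * p i) (cvec n)).mulVec e)
      = θ • (Amat n + Matrix.vecMulVec p (cvec n)).mulVec ((DdiagInv n θ).mulVec e) := by
  funext i
  rw [DdiagInv_mulVec_apply, Pi.smul_apply, smul_eq_mul, Matrix.mulVec_apply_eq_sum,
    Matrix.mulVec_apply_eq_sum, Finset.mul_sum, Finset.mul_sum]
  refine Finset.sum_congr rfl fun j _ => ?_
  rw [DdiagInv_mulVec_apply]
  simp only [Matrix.add_apply, Matrix.vecMulVec_apply, Amat, cvec, Matrix.of_apply]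
  have hi : θ ^ (i : ℕ) ≠ 0 := (pow_pos hθ _).ne'
  have h0 := hθ.ne'
  by_cases hj : (j : ℕ) = 0
  · simp only [hj, if_true, pow_succ, pow_zero]
    rw [if_neg (by omega)]
    field_simp
    try ring
  · rw [if_neg hj]
    split_ifs with h
    · rw [h]
      simp only [pow_succ]
      field_simp
      try ring
    · simp

/-- The matrix inequality, read as a bound on the quadratic form `z'Q(A+pc')z`. -/
lemma lmi_bound {n : ℕ} {q : ℝ} {Q : Matrix (Fin n) (Fin n) ℝ} (hQ : Q.PosDef) {p : Fin n → ℝ}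
    (hLMI : (-(Q * (Amat n + Matrix.vecMulVec p (cvec n))
        + ((Amat n)ᵀ + Matrix.vecMulVec (cvec n) p) * Q
        + (2*q) • (1 : Matrix (Fin n) (Fin n) ℝ))).PosSemidef) (z : Fin n → ℝ) :
    z ⬝ᵥ Q.mulVec ((Amat n + Matrix.vecMulVec p (cvec n)).mulVec z) ≤ -(q * enorm' z ^ 2) := by
  have h := hLMI.dotProduct_mulVec_nonneg z
  have hQt : Qᵀ = Q := by simpa using hQ.isHermitian.eq
  set B := Amat n + Matrix.vecMulVec p (cvec n) with hB
  have hBt : (Amat n)ᵀ + Matrix.vecMulVec (cvec n) p = Bᵀ := by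
    rw [hB, Matrix.transpose_add, Matrix.transpose_vecMulVec]
  rw [hBt] at h
  have hsym : z ⬝ᵥ (Bᵀ * Q).mulVec z = z ⬝ᵥ (Q * B).mulVec z := by
    have : (Bᵀ * Q) = (Q * B)ᵀ := by rw [Matrix.transpose_mul, hQt]
    rw [this, Matrix.mulVec_transpose, dotProduct_comm, ← Matrix.dotProduct_mulVec]
  have hzz : z ⬝ᵥ z = enorm' z ^ 2 := by
    rw [enorm'_sq]
    simp [dotProduct, sq]
  simp only [star_trivial, Matrix.neg_mulVec, Matrix.add_mulVec, Matrix.smul_mulVec,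
    Matrix.one_mulVec, dotProduct_neg, dotProduct_add, dotProduct_smul, smul_eq_mul, hsym,
    hzz] at h
  rw [Matrix.mulVec_mulVec]
  linarith

/-- Component `i` of `f` sees only the first coordinates of `e`, whose scaling factors are at most
that of component `i`; hence each component of `Δ_θ⁻¹p̃` is bounded by `L|Δ_θ⁻¹e|`. -/
lemma scaled_increment_le {n : ℕ} {L θ : ℝ} (hL : 0 ≤ L) (hθ : 1 ≤ θ)
    {f : Fin n → (Fin n → ℝ) → ℝ}
    (hfLip : ∀ (i : Fin n) (x z : Fin n → ℝ), |f i x - f i z| ≤ L * enorm' (x - z))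
    (hfTri : ∀ (i : Fin n) (x z : Fin n → ℝ),
      (∀ j : Fin n, j ≤ i → x j = z j) → f i x = f i z) (x e : Fin n → ℝ) :
    enorm' ((DdiagInv n θ).mulVec fun i => f i (x + e) - f i x)
      ≤ Real.sqrt n * (L * enorm' ((DdiagInv n θ).mulVec e)) := by
  refine enorm'_le_sqrt_mul (mul_nonneg hL (enorm'_nonneg _)) fun i => ?_
  have hpos : ∀ k : ℕ, 0 < θ ^ k := fun k => pow_pos (by linarith) k
  rw [DdiagInv_mulVec_apply, abs_mul, abs_of_pos (inv_pos.2 (hpos _)), inv_mul_le_iff₀ (hpos _)]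
  -- Truncating `e` beyond coordinate `i` does not change `f i (x + e)`.
  set t : Fin n → ℝ := fun j => if j ≤ i then e j else 0 with ht
  have hxt : f i (x + e) = f i (x + t) := hfTri i _ _ fun j hj => by simp [ht, hj]
  have h1 := hfLip i (x + t) x
  rw [add_sub_cancel_left] at h1
  have h2 : enorm' t ≤ θ ^ ((i : ℕ) + 1) * enorm' ((DdiagInv n θ).mulVec e) := by
    refine enorm'_le_mul (hpos _).le fun j => ?_
    rw [DdiagInv_mulVec_apply, abs_mul, abs_of_pos (inv_pos.2 (hpos _))]
    by_cases hj : j ≤ i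
    · simp only [ht, hj, if_true]
      rw [← mul_assoc, ← div_eq_mul_inv]
      refine le_mul_of_one_le_left (abs_nonneg _) ?_
      rw [one_le_div (hpos _)]
      exact pow_le_pow_right₀ hθ (by simpa using hj)
    · simp only [ht, hj, if_false, abs_zero]
      have := (hpos ((i : ℕ) + 1)).le
      have := (hpos ((j : ℕ) + 1)).le
      positivity
  rw [hxt]
  calc _ ≤ L * enorm' t := h1
    _ ≤ L * (θ ^ ((i : ℕ) + 1) * enorm' ((DdiagInv n θ).mulVec e)) :=
        mul_le_mul_of_nonneg_left h2 hL
    _ = _ := by ring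

lemma scaled_disturbance_le {n : ℕ} {G θ : ℝ} (hG : 0 ≤ G) (hθ : 1 ≤ θ) {lam : Fin n → ℝ}
    (hlam : ∀ i, |lam i| ≤ G) (d : Fin n → ℝ) :
    enorm' ((DdiagInv n θ).mulVec fun i => lam i * d i) ≤ G / θ * enorm' d := by
  have h0 : 0 < θ := by linarith
  refine enorm'_le_mul (by positivity) fun i => ?_
  rw [DdiagInv_mulVec_apply, abs_mul, abs_mul, abs_of_pos (inv_pos.2 (pow_pos h0 _)), ← mul_assoc]
  refine mul_le_mul_of_nonneg_right ?_ (abs_nonneg _)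
  rw [div_eq_inv_mul]
  refine mul_le_mul ?_ (hlam i) (abs_nonneg _) (by positivity)
  exact inv_anti₀ h0 (le_self_pow₀ hθ (by omega))

/-- Young's inequality with weight `k / 4`. -/
lemma young_quarter {k : ℝ} (hk : 0 < k) (s a : ℝ) : 2 * (s * a) ≤ k / 4 * s ^ 2 + 4 / k * a ^ 2 := by
  have : k / 4 * s ^ 2 + 4 / k * a ^ 2 - 2 * (s * a) = (k * s - 4 * a) ^ 2 / (4 * k) := by
    field_simp
    ring
  have h2 : 0 ≤ (k * s - 4 * a) ^ 2 / (4 * k) := by positivity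
  linarith

/-- Let `Q` be symmetric positive definite with
`Q(A+pc') + (A'+cp')Q + 2qI ≤ 0` for some `q > 0`, and suppose
`θ ≥ max(1, 2|Q|L√n/q)`.  With `Δ_θ = diag(θ,…,θⁿ)` and
`V(e) = e'Δ_θ⁻¹QΔ_θ⁻¹e`, for all `e, x, d ∈ ℝⁿ`, `η ∈ ℝ` and `λᵢ` with
`|λᵢ| ≤ G`, the derivative of `V` along
`ė = (A+Δ_θpc')e + Δ_θpη + p̃(x,e) - diag(λ₁,…,λₙ)d`, `p̃(x,e) = f(x+e)-f(x)`,
satisfies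
`2e'Δ_θ⁻¹QΔ_θ⁻¹(ė) ≤ -(θq/(2|Q|))V(e) + (4/(θq))|Qp|²η² + (4G²/(θ³q))|Q|²|d|²`. -/
theorem stmt13 (n : ℕ) (hn : 1 ≤ n) (L G q θ : ℝ) (hL : 0 ≤ L) (hG : 0 ≤ G) (hq : 0 < q)
    (f : Fin n → (Fin n → ℝ) → ℝ)
    (hf0 : ∀ i, f i (fun _ => 0) = 0)
    (hfLip : ∀ (i : Fin n) (x z : Fin n → ℝ), |f i x - f i z| ≤ L * enorm' (x - z))
    (hfTri : ∀ (i : Fin n) (x z : Fin n → ℝ),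
      (∀ j : Fin n, j ≤ i → x j = z j) → f i x = f i z)
    (Q : Matrix (Fin n) (Fin n) ℝ) (hQ : Q.PosDef) (p : Fin n → ℝ)
    (hLMI : (-(Q * (Amat n + Matrix.vecMulVec p (cvec n))
        + ((Amat n)ᵀ + Matrix.vecMulVec (cvec n) p) * Q
        + (2*q) • (1 : Matrix (Fin n) (Fin n) ℝ))).PosSemidef)
    (hθ : θ ≥ max 1 (2 * matNorm' Q * L * Real.sqrt n / q)) :
    ∀ (e x d : Fin n → ℝ) (η : ℝ) (lam : Fin n → ℝ), (∀ i, |lam i| ≤ G) →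
      2 * (e ⬝ᵥ (DdiagInv n θ * Q * DdiagInv n θ).mulVec
          ((Amat n + Matrix.vecMulVec (fun i : Fin n => θ^((i:ℕ)+1) * p i) (cvec n)).mulVec e
            + (fun i : Fin n => θ^((i:ℕ)+1) * p i * η)
            + (fun i : Fin n => f i (x + e) - f i x)
            - (fun i : Fin n => lam i * d i)))
        ≤ -(θ*q/(2*matNorm' Q)) * (e ⬝ᵥ (DdiagInv n θ * Q * DdiagInv n θ).mulVec e)
          + 4/(θ*q) * (enorm' (Q.mulVec p))^2 * η^2
          + 4*G^2/(θ^3*q) * (matNorm' Q)^2 * (enorm' d)^2 := by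
  intro e x d η lam hlam
  have hθ1 : 1 ≤ θ := le_trans (le_max_left _ _) hθ
  have hθ0 : 0 < θ := by linarith
  have hθ2 : 2 * matNorm' Q * L * Real.sqrt n ≤ θ * q :=
    (div_le_iff₀ hq).1 (le_trans (le_max_right _ _) hθ)
  have hk : 0 < θ * q := mul_pos hθ0 hq
  rw [dotProduct_scaled_mulVec, dotProduct_scaled_mulVec]
  have hp : (DdiagInv n θ).mulVec (fun i : Fin n => θ^((i:ℕ)+1) * p i * η) = η • p := by
    funext i
    rw [DdiagInv_mulVec_apply, Pi.smul_apply, smul_eq_mul]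
    have := (pow_pos hθ0 ((i : ℕ) + 1)).ne'
    field_simp
  rw [Matrix.mulVec_sub, Matrix.mulVec_add, Matrix.mulVec_add, hp, scaled_dynamics hθ0,
    Matrix.mulVec_sub, Matrix.mulVec_add, Matrix.mulVec_add, Matrix.mulVec_smul,
    Matrix.mulVec_smul, dotProduct_sub, dotProduct_add, dotProduct_add, dotProduct_smul,
    dotProduct_smul, smul_eq_mul, smul_eq_mul]
  have hinc := scaled_increment_le hL hθ1 hfLip hfTri x e
  have hdis := scaled_disturbance_le hG hθ1 hlam d
  set z := (DdiagInv n θ).mulVec e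
  set u := (DdiagInv n θ).mulVec (fun i => f i (x + e) - f i x)
  set w := (DdiagInv n θ).mulVec (fun i => lam i * d i)
  have hs := enorm'_nonneg z
  have hM := matNorm'_nonneg Q
  have t1 := mul_le_mul_of_nonneg_left (lmi_bound hQ hLMI z) hθ0.le
  have t2 : 2 * (η * (z ⬝ᵥ Q.mulVec p))
      ≤ θ * q / 4 * enorm' z ^ 2 + 4 / (θ * q) * enorm' (Q.mulVec p) ^ 2 * η ^ 2 := by
    have h1 := dotProduct_le_enorm' (η • z) (Q.mulVec p)
    rw [smul_dotProduct, smul_eq_mul, enorm'_smul] at h1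
    have h2 := young_quarter hk (enorm' z) (enorm' (Q.mulVec p) * |η|)
    rw [mul_pow, sq_abs, ← mul_assoc (4 / (θ * q))] at h2
    linarith
  have t3 : 2 * (z ⬝ᵥ Q.mulVec u) ≤ θ * q * enorm' z ^ 2 := by
    have h1 := dotProduct_mulVec_le Q z u
    have h2 := mul_le_mul_of_nonneg_left hinc (mul_nonneg hM hs)
    have h3 := mul_le_mul_of_nonneg_right hθ2 (sq_nonneg (enorm' z))
    linarith
  have t4 : -(2 * (z ⬝ᵥ Q.mulVec w)) ≤ θ * q / 4 * enorm' z ^ 2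
      + 4 * G ^ 2 / (θ ^ 3 * q) * matNorm' Q ^ 2 * enorm' d ^ 2 := by
    have h1 := dotProduct_mulVec_le Q ((-1 : ℝ) • z) w
    rw [smul_dotProduct, smul_eq_mul, enorm'_smul, abs_neg, abs_one] at h1
    have h2 := mul_le_mul_of_nonneg_left hdis (mul_nonneg hM hs)
    have h3 := young_quarter hk (enorm' z) (matNorm' Q * (G / θ * enorm' d))
    have h4 : 4 / (θ * q) * (matNorm' Q * (G / θ * enorm' d)) ^ 2
        = 4 * G ^ 2 / (θ ^ 3 * q) * matNorm' Q ^ 2 * enorm' d ^ 2 := by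
      field_simp
    linarith
  have t5 : θ * q / (2 * matNorm' Q) * (z ⬝ᵥ Q.mulVec z) ≤ θ * q / 2 * enorm' z ^ 2 := by
    rcases hM.eq_or_lt with h0 | h0
    · rw [← h0, mul_zero, div_zero, zero_mul]
      positivity
    · have h1 := mul_le_mul_of_nonneg_left (dotProduct_mulVec_le Q z z)
        (by positivity : 0 ≤ θ * q / (2 * matNorm' Q))
      have h2 : θ * q / (2 * matNorm' Q) * (matNorm' Q * enorm' z * enorm' z)
          = θ * q / 2 * enorm' z ^ 2 := by
        field_simp
      linarith
  linarith
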